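/- Let f = id ∗ g with g(n) = O(1), let δ ∈ {0, 1}, and define 𝔖_δ(x, D) = ∑_{D < d ≤ 2D} (f(d)/d) ψ(x/(d+δ)), where ψ(t) = {t} − 1/2. Then, using the exponent pair (1/2, 1/2), uniformly for 1 ≤ D ≤ x, 𝔖_δ(x, D) = O(x^{1/3} + x^{1/2} D^{−1/2} log x + x^{−1} D²). -/

import Mathlib

open Finset

/-- The periodised second Bernoulli polynomial. -/
noncomputable def periodicBernoulliTwo (t : ℝ) : ℝ := Int.fract t ^ 2 - Int.fract t + 1 / 6

lemma sawtooth_le {Δ : ℝ} (h0 : 0 < Δ) (h1 : Δ ≤ 1) (u : ℝ) :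
    Int.fract u - 1 / 2 ≤
      (periodicBernoulliTwo u - periodicBernoulliTwo (u - Δ)) / (2 * Δ) + Δ := by
  have ht0 := Int.fract_nonneg u
  have ht1 := Int.fract_lt_one u
  rw [← sub_le_iff_le_add, le_div_iff₀ (by positivity)]
  unfold periodicBernoulliTwo
  by_cases h : Δ ≤ Int.fract u
  · have : Int.fract (u - Δ) = Int.fract u - Δ := by
      rw [Int.fract_eq_iff]
      refine ⟨by linarith, by linarith, ⌊u⌋, ?_⟩
      rw [Int.fract]; ring
    rw [this]
    nlinarith
  · push Not at h
    have : Int.fract (u - Δ) = Int.fract u - Δ + 1 := by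
      rw [Int.fract_eq_iff]
      refine ⟨by linarith, by linarith, ⌊u⌋ - 1, ?_⟩
      push_cast
      rw [Int.fract]; ring
    rw [this]
    nlinarith

lemma le_sawtooth {Δ : ℝ} (h0 : 0 < Δ) (h1 : Δ ≤ 1) (u : ℝ) :
    (periodicBernoulliTwo (u + Δ) - periodicBernoulliTwo u) / (2 * Δ) - Δ ≤
      Int.fract u - 1 / 2 := by
  have ht0 := Int.fract_nonneg u
  have ht1 := Int.fract_lt_one u
  rw [sub_le_iff_le_add, div_le_iff₀ (by positivity)]
  unfold periodicBernoulliTwo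
  by_cases h : Int.fract u + Δ < 1
  · have : Int.fract (u + Δ) = Int.fract u + Δ := by
      rw [Int.fract_eq_iff]
      refine ⟨by linarith, by linarith, ⌊u⌋, ?_⟩
      rw [Int.fract]; ring
    rw [this]
    nlinarith
  · push Not at h
    have : Int.fract (u + Δ) = Int.fract u + Δ - 1 := by
      rw [Int.fract_eq_iff]
      refine ⟨by linarith, by linarith, ⌊u⌋ + 1, ?_⟩
      push_cast
      rw [Int.fract]; ring
    rw [this]
    nlinarith

lemma hasSum_periodicBernoulliTwo (t : ℝ) :
    HasSum (fun n : ℕ => 1 / (Real.pi ^ 2 * (n : ℝ) ^ 2) * Real.cos (2 * Real.pi * n * t))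
      (periodicBernoulliTwo t) := by
  have h := hasSum_one_div_nat_pow_mul_cos (k := 1) one_ne_zero (x := Int.fract t)
    ⟨Int.fract_nonneg t, (Int.fract_lt_one t).le⟩
  have h2 := h.mul_left (1 / Real.pi ^ 2)
  have hpi := Real.pi_ne_zero
  convert! h2 using 1
  · funext n
    have : Real.cos (2 * Real.pi * n * t) = Real.cos (2 * Real.pi * n * Int.fract t) := by
      have h3 : 2 * Real.pi * n * t = 2 * Real.pi * n * Int.fract t
          + ((n * ⌊t⌋ : ℤ) : ℝ) * (2 * Real.pi) := by
        push_cast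
        rw [Int.fract]; ring
      rw [h3, Real.cos_add_int_mul_two_pi]
    rw [this]
    field_simp
  · have h4 := bernoulliFun_two (Int.fract t)
    rw [bernoulliFun] at h4
    rw [periodicBernoulliTwo, mul_one, h4]
    norm_num [Nat.factorial]
    field_simp

/-- The additive character `t ↦ exp (2πit)`. -/
noncomputable def expChar (t : ℝ) : ℂ := Complex.exp (2 * Real.pi * t * Complex.I)

lemma norm_expChar (t : ℝ) : ‖expChar t‖ = 1 := by
  have := Complex.norm_exp_ofReal_mul_I (2 * Real.pi * t)
  rw [expChar]
  exact_mod_cast this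

lemma expChar_add (s t : ℝ) : expChar (s + t) = expChar s * expChar t := by
  rw [expChar, expChar, expChar, ← Complex.exp_add]
  push_cast
  ring_nf

lemma expChar_int (n : ℤ) : expChar n = 1 := by
  rw [expChar, Complex.exp_eq_one_iff]
  exact ⟨n, by push_cast; ring⟩

lemma re_expChar (t : ℝ) : (expChar t).re = Real.cos (2 * Real.pi * t) := by
  have := Complex.exp_ofReal_mul_I_re (2 * Real.pi * t)
  rw [expChar]
  exact_mod_cast this

lemma norm_expChar_sub_le (s t : ℝ) : ‖expChar s - expChar t‖ ≤ 2 * Real.pi * |s - t| := by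
  have h : expChar s - expChar t = expChar t * (expChar (s - t) - 1) := by
    rw [mul_sub, ← expChar_add]; simp
  rw [h, norm_mul, norm_expChar, one_mul]
  have := Real.norm_exp_I_mul_ofReal_sub_one_le (x := 2 * Real.pi * (s - t))
  rw [Real.norm_eq_abs, abs_mul, abs_of_pos Real.two_pi_pos] at this
  convert this using 3
  rw [expChar]; push_cast; ring_nf

/-- The number `1 / (e(a) - 1) = -(1 + i cot(πa)) / 2`, for non-integral `a`. -/
noncomputable def cotCoeff (a : ℝ) : ℂ :=
  -(1 / 2) * (1 + Complex.I * ((Real.cos (Real.pi * a) / Real.sin (Real.pi * a) : ℝ) : ℂ))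

lemma cotCoeff_mul {a : ℝ} (h : Real.sin (Real.pi * a) ≠ 0) :
    cotCoeff a * (expChar a - 1) = 1 := by
  have e1 : expChar a = (Real.cos (Real.pi * a) + Real.sin (Real.pi * a) * Complex.I) ^ 2 := by
    rw [Complex.ofReal_cos, Complex.ofReal_sin, ← Complex.exp_mul_I, ← Complex.exp_nat_mul, expChar]
    push_cast; ring_nf
  have hs : (Real.sin (Real.pi * a) : ℂ) ≠ 0 := by exact_mod_cast h
  have h1 : (Real.sin (Real.pi * a) : ℂ) ^ 2 + (Real.cos (Real.pi * a) : ℂ) ^ 2 = 1 := by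
    exact_mod_cast Real.sin_sq_add_cos_sq (Real.pi * a)
  rw [e1, cotCoeff]
  push_cast at hs h1 ⊢
  set s := Complex.sin (Real.pi * a)
  set c := Complex.cos (Real.pi * a)
  field_simp
  have hI := Complex.I_sq
  linear_combination (s - Complex.I * c) * h1 + (-s^3 - 2 * c^2 * s - c * s ^ 2 * Complex.I) * hI

lemma two_mul_le_sin {θ a : ℝ} (h0 : 0 < θ) (h1 : θ ≤ a) (h2 : a ≤ 1 - θ) :
    2 * θ ≤ Real.sin (Real.pi * a) := by
  have hp := Real.pi_pos
  rcases le_total a (1 / 2) with h | h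
  · have := Real.mul_le_sin (x := Real.pi * a) (by nlinarith) (by nlinarith)
    have e : 2 / Real.pi * (Real.pi * a) = 2 * a := by field_simp
    linarith
  · have := Real.mul_le_sin (x := Real.pi - Real.pi * a) (by nlinarith) (by nlinarith)
    have e : 2 / Real.pi * (Real.pi - Real.pi * a) = 2 * (1 - a) := by field_simp
    rw [Real.sin_pi_sub] at this
    linarith

lemma norm_cotCoeff_sub {a b : ℝ} (ha : 0 < Real.sin (Real.pi * a))
    (hb : 0 < Real.sin (Real.pi * b)) (hab : a ≤ b) (hba : b ≤ a + 1) :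
    ‖cotCoeff a - cotCoeff b‖ = (Real.cos (Real.pi * a) / Real.sin (Real.pi * a)
      - Real.cos (Real.pi * b) / Real.sin (Real.pi * b)) / 2 := by
  have h : cotCoeff a - cotCoeff b = -(Complex.I / 2) *
      ((Real.cos (Real.pi * a) / Real.sin (Real.pi * a)
        - Real.cos (Real.pi * b) / Real.sin (Real.pi * b) : ℝ) : ℂ) := by
    rw [cotCoeff, cotCoeff]; push_cast; ring
  have hnn : 0 ≤ Real.cos (Real.pi * a) / Real.sin (Real.pi * a)
      - Real.cos (Real.pi * b) / Real.sin (Real.pi * b) := by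
    have hs : 0 ≤ Real.sin (Real.pi * b - Real.pi * a) :=
      Real.sin_nonneg_of_nonneg_of_le_pi (by nlinarith [Real.pi_pos]) (by nlinarith [Real.pi_pos])
    rw [Real.sin_sub] at hs
    rw [div_sub_div _ _ ha.ne' hb.ne']
    apply div_nonneg _ (by positivity)
    linarith
  rw [h, norm_mul, Complex.norm_real, Real.norm_of_nonneg hnn]
  simp
  ring

lemma abs_cot_le {θ a : ℝ} (h0 : 0 < θ) (h : 2 * θ ≤ Real.sin (Real.pi * a)) :
    |Real.cos (Real.pi * a) / Real.sin (Real.pi * a)| ≤ 1 / (2 * θ) := by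
  rw [abs_div]
  exact div_le_div₀ zero_le_one (Real.abs_cos_le_one _) (by positivity)
    (h.trans (le_abs_self _))

lemma norm_cotCoeff_le {θ a : ℝ} (h0 : 0 < θ) (hθ : θ ≤ 1 / 2)
    (h : 2 * θ ≤ Real.sin (Real.pi * a)) : ‖cotCoeff a‖ ≤ 1 / (2 * θ) := by
  have h1 : 1 ≤ 1 / (2 * θ) := by rw [le_div_iff₀ (by positivity)]; linarith
  have h2 := abs_cot_le h0 h
  rw [cotCoeff, norm_mul]
  have h3 := norm_add_le (1 : ℂ)
    (Complex.I * ((Real.cos (Real.pi * a) / Real.sin (Real.pi * a) : ℝ) : ℂ))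
  rw [norm_mul, Complex.norm_real, Complex.norm_I, norm_one, Real.norm_eq_abs] at h3
  have h4 : ‖(-(1 / 2) : ℂ)‖ = 1 / 2 := by norm_num
  rw [h4]
  linarith

lemma kusmin_landau_aux {G : ℕ → ℝ} {θ : ℝ} {p : ℕ} (h0 : 0 < θ) (n : ℕ)
    (hlo : ∀ k ∈ Finset.Icc p (p + n), θ ≤ G (k + 1) - G k)
    (hhi : ∀ k ∈ Finset.Icc p (p + n), G (k + 1) - G k ≤ 1 - θ)
    (hmono : ∀ k ∈ Finset.Ico p (p + n), G (k + 1) - G k ≤ G (k + 2) - G (k + 1)) :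
    ‖∑ k ∈ Finset.Ico p (p + n + 1), expChar (G k)
        - cotCoeff (G (p + n + 1) - G (p + n)) * expChar (G (p + n + 1))‖ ≤
      ‖cotCoeff (G (p + 1) - G p)‖ +
        (Real.cos (Real.pi * (G (p + 1) - G p)) / Real.sin (Real.pi * (G (p + 1) - G p))
          - Real.cos (Real.pi * (G (p + n + 1) - G (p + n)))
            / Real.sin (Real.pi * (G (p + n + 1) - G (p + n)))) / 2 := by
  have hsin : ∀ k ∈ Finset.Icc p (p + n), 0 < Real.sin (Real.pi * (G (k + 1) - G k)) :=
    fun k hk => lt_of_lt_of_le (by positivity) (two_mul_le_sin h0 (hlo k hk) (hhi k hk))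
  have hE : ∀ k ∈ Finset.Icc p (p + n),
      cotCoeff (G (k + 1) - G k) * (expChar (G (k + 1)) - expChar (G k)) = expChar (G k) := by
    intro k hk
    have h1 := cotCoeff_mul (hsin k hk).ne'
    have h2 : expChar (G (k + 1)) = expChar (G k) * expChar (G (k + 1) - G k) := by
      rw [← expChar_add]; ring_nf
    rw [h2]
    linear_combination expChar (G k) * h1
  induction n with
  | zero =>
    have h1 := hE p (by simp)
    simp only [add_zero, Nat.Ico_succ_singleton, Finset.sum_singleton, sub_self, zero_div]
    have h2 : expChar (G p) - cotCoeff (G (p + 1) - G p) * expChar (G (p + 1))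
        = - (cotCoeff (G (p + 1) - G p) * expChar (G p)) := by linear_combination -h1
    rw [h2, norm_neg, norm_mul, norm_expChar, mul_one]
  | succ n ih =>
    have sub : ∀ k ∈ Finset.Icc p (p + n), k ∈ Finset.Icc p (p + (n + 1)) := by
      intro k hk; simp only [Finset.mem_Icc] at hk ⊢; omega
    have ih' := ih (fun k hk => hlo k (sub k hk)) (fun k hk => hhi k (sub k hk))
      (fun k hk => hmono k (by simp only [Finset.mem_Ico] at hk ⊢; omega))
      (fun k hk => hsin k (sub k hk)) (fun k hk => hE k (sub k hk))
    have m1 : p + n ∈ Finset.Icc p (p + (n + 1)) := by simp only [Finset.mem_Icc]; omega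
    have m2 : p + n + 1 ∈ Finset.Icc p (p + (n + 1)) := by simp only [Finset.mem_Icc]; omega
    have hd := norm_cotCoeff_sub (hsin _ m1) (hsin _ m2)
      (hmono (p + n) (by simp only [Finset.mem_Ico]; omega))
      (by linarith [hlo _ m1, hhi _ m2])
    have h1 := hE _ m2
    have e1 : p + (n + 1) = p + n + 1 := rfl
    rw [e1, Finset.sum_Ico_succ_top (by omega)]
    have h2 : ∑ k ∈ Finset.Ico p (p + n + 1), expChar (G k) + expChar (G (p + n + 1))
        - cotCoeff (G (p + n + 1 + 1) - G (p + n + 1)) * expChar (G (p + n + 1 + 1))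
        = (∑ k ∈ Finset.Ico p (p + n + 1), expChar (G k)
          - cotCoeff (G (p + n + 1) - G (p + n)) * expChar (G (p + n + 1)))
          + (cotCoeff (G (p + n + 1) - G (p + n))
            - cotCoeff (G (p + n + 1 + 1) - G (p + n + 1))) * expChar (G (p + n + 1)) := by
      linear_combination -h1
    rw [h2]
    refine (norm_add_le _ _).trans ?_
    rw [norm_mul, norm_expChar, mul_one, hd]
    linarith

/-- The Kusmin–Landau inequality, in terms of the differences of the phase. -/
lemma kusmin_landau {G : ℕ → ℝ} {θ : ℝ} {p q : ℕ} (h0 : 0 < θ) (hθ : θ ≤ 1 / 2) (j : ℤ)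
    (hlo : ∀ k ∈ Finset.Ico p q, j + θ ≤ G (k + 1) - G k)
    (hhi : ∀ k ∈ Finset.Ico p q, G (k + 1) - G k ≤ j + 1 - θ)
    (hmono : ∀ k, p ≤ k → k + 1 < q → G (k + 1) - G k ≤ G (k + 2) - G (k + 1)) :
    ‖∑ k ∈ Finset.Ico p q, expChar (G k)‖ ≤ 2 / θ := by
  rcases le_or_gt q p with h | h
  · rw [Finset.Ico_eq_empty (by omega)]; simp; positivity
  obtain ⟨n, rfl⟩ : ∃ n, q = p + n + 1 := ⟨q - p - 1, by omega⟩
  set F : ℕ → ℝ := fun k => G k - j * k with hF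
  have hFd : ∀ k, F (k + 1) - F k = G (k + 1) - G k - j := by
    intro k; simp only [hF]; push_cast; ring
  have hsum : ∑ k ∈ Finset.Ico p (p + n + 1), expChar (G k)
      = ∑ k ∈ Finset.Ico p (p + n + 1), expChar (F k) := by
    refine Finset.sum_congr rfl fun k _ => ?_
    have : G k = F k + ((j * k : ℤ) : ℝ) := by simp only [hF]; push_cast; ring
    rw [this, expChar_add, expChar_int, mul_one]
  have hlo' : ∀ k ∈ Finset.Icc p (p + n), θ ≤ F (k + 1) - F k := by
    intro k hk
    have := hlo k (by simp only [Finset.mem_Ico, Finset.mem_Icc] at hk ⊢; omega)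
    rw [hFd]; linarith
  have hhi' : ∀ k ∈ Finset.Icc p (p + n), F (k + 1) - F k ≤ 1 - θ := by
    intro k hk
    have := hhi k (by simp only [Finset.mem_Ico, Finset.mem_Icc] at hk ⊢; omega)
    rw [hFd]; linarith
  have key := kusmin_landau_aux h0 n hlo' hhi' (by
    intro k hk
    rw [Finset.mem_Ico] at hk
    have := hmono k hk.1 (by omega)
    have e := hFd (k + 1)
    rw [hFd]; linarith)
  have mp : p ∈ Finset.Icc p (p + n) := by simp
  have mq : p + n ∈ Finset.Icc p (p + n) := by simp
  have sp := two_mul_le_sin h0 (hlo' p mp) (hhi' p mp)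
  have sq := two_mul_le_sin h0 (hlo' _ mq) (hhi' _ mq)
  have b1 := norm_cotCoeff_le h0 hθ sp
  have b2 := norm_cotCoeff_le h0 hθ sq
  have b3 := (abs_le.mp (abs_cot_le h0 sp)).2
  have b4 := (abs_le.mp (abs_cot_le h0 sq)).1
  rw [hsum]
  have tri := norm_sub_norm_le (∑ k ∈ Finset.Ico p (p + n + 1), expChar (F k))
    (cotCoeff (F (p + n + 1) - F (p + n)) * expChar (F (p + n + 1)))
  rw [norm_mul, norm_expChar, mul_one] at tri
  have e : 2 / θ = 4 * (1 / (2 * θ)) := by field_simp; norm_num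
  have : 0 < 1 / (2 * θ) := by positivity
  rw [e]
  linarith

lemma exists_eq_Ico_of_ordConnected (s : Finset ℕ)
    (hs : ∀ a ∈ s, ∀ b ∈ s, ∀ c, a ≤ c → c ≤ b → c ∈ s) :
    ∃ p q, s = Finset.Ico p q := by
  rcases s.eq_empty_or_nonempty with rfl | h
  · exact ⟨0, 0, by simp⟩
  · refine ⟨s.min' h, s.max' h + 1, ?_⟩
    ext c
    rw [Finset.mem_Ico]
    constructor
    · intro hc
      exact ⟨s.min'_le c hc, Nat.lt_succ_of_le (s.le_max' c hc)⟩
    · rintro ⟨h1, h2⟩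
      exact hs _ (s.min'_mem h) _ (s.max'_mem h) c h1 (Nat.lt_succ_iff.mp h2)

lemma card_le_of_separated {s : Finset ℕ} {a : ℕ → ℝ} {l θ β : ℝ} (hl : 0 < l) (hθ : 0 ≤ θ)
    (hsep : ∀ i ∈ s, ∀ k ∈ s, i ≤ k → l * (k - i : ℝ) ≤ a k - a i)
    (hlo : ∀ k ∈ s, β ≤ a k) (hhi : ∀ k ∈ s, a k ≤ β + θ) :
    (s.card : ℝ) ≤ θ / l + 1 := by
  rcases s.eq_empty_or_nonempty with rfl | h
  · simp; positivity
  have hm := s.min'_mem h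
  have hM := s.max'_mem h
  have hle : s.min' h ≤ s.max' h := s.min'_le _ hM
  have h1 := hsep _ hm _ hM hle
  have h2 : (s.max' h - s.min' h : ℝ) ≤ θ / l := by
    rw [le_div_iff₀ hl]
    linarith [hlo _ hm, hhi _ hM]
  have h3 : s ⊆ Finset.Icc (s.min' h) (s.max' h) := fun k hk =>
    Finset.mem_Icc.mpr ⟨s.min'_le _ hk, s.le_max' _ hk⟩
  have h4 := Finset.card_le_card h3
  rw [Nat.card_Icc] at h4
  have h5 : (s.card : ℝ) ≤ (s.max' h : ℝ) + 1 - s.min' h := by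
    rw [← Nat.cast_add_one, ← Nat.cast_sub (by omega)]
    exact_mod_cast h4
  linarith

/-- A form of van der Corput's second derivative test: the phase differences increase with slope
at least `l` and stay in an interval of length `R`. -/
lemma norm_sum_expChar_le {G : ℕ → ℝ} {p q : ℕ} {l θ α R : ℝ} (hl : 0 < l) (h0 : 0 < θ)
    (hθ : θ ≤ 1 / 2)
    (hsep : ∀ i ∈ Finset.Ico p q, ∀ k ∈ Finset.Ico p q, i ≤ k →
      l * (k - i : ℝ) ≤ (G (k + 1) - G k) - (G (i + 1) - G i))
    (hlo : ∀ k ∈ Finset.Ico p q, α ≤ G (k + 1) - G k)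
    (hhi : ∀ k ∈ Finset.Ico p q, G (k + 1) - G k ≤ α + R) (hR : 0 ≤ R) :
    ‖∑ k ∈ Finset.Ico p q, expChar (G k)‖ ≤ (R + 2) * (2 / θ + 2 * (θ / l + 1)) := by
  set a : ℕ → ℝ := fun k => G (k + 1) - G k with ha
  have hmono : ∀ i ∈ Finset.Ico p q, ∀ k ∈ Finset.Ico p q, i ≤ k → a i ≤ a k := by
    intro i hi k hk hik
    have h1 := hsep i hi k hk hik
    have h2 : (0 : ℝ) ≤ k - i := by rw [sub_nonneg]; exact_mod_cast hik
    have : 0 ≤ l * (k - i : ℝ) := by positivity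
    simp only [ha]; linarith
  have hcard : ∀ s ⊆ Finset.Ico p q, ∀ β : ℝ, (∀ k ∈ s, β ≤ a k) → (∀ k ∈ s, a k ≤ β + θ) →
      ‖∑ k ∈ s, expChar (G k)‖ ≤ θ / l + 1 := by
    intro s hs β h1 h2
    refine (norm_sum_le _ _).trans ?_
    simp only [norm_expChar, Finset.sum_const, nsmul_eq_mul, mul_one]
    exact card_le_of_separated hl h0.le
      (fun i hi k hk hik => hsep i (hs hi) k (hs hk) hik) h1 h2
  have hfib : ∀ j : ℤ, ‖∑ k ∈ (Finset.Ico p q).filter (fun k => ⌊a k⌋ = j), expChar (G k)‖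
      ≤ 2 / θ + 2 * (θ / l + 1) := by
    intro j
    set s := (Finset.Ico p q).filter (fun k => ⌊a k⌋ = j) with hs
    have hsp : s ⊆ Finset.Ico p q := Finset.filter_subset _ _
    have hfl : ∀ k ∈ s, (j : ℝ) ≤ a k ∧ a k < j + 1 := by
      intro k hk
      have := (Finset.mem_filter.mp hk).2
      rwa [Int.floor_eq_iff] at this
    rw [← Finset.sum_filter_add_sum_filter_not s (fun k => a k < j + θ),
      ← Finset.sum_filter_add_sum_filter_not (s.filter (fun k => ¬ a k < j + θ))
        (fun k => a k ≤ j + 1 - θ)]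
    have b1 : ‖∑ k ∈ s.filter (fun k => a k < j + θ), expChar (G k)‖ ≤ θ / l + 1 := by
      refine hcard _ ((Finset.filter_subset _ _).trans hsp) j ?_ ?_
      · intro k hk; exact (hfl k (Finset.mem_filter.mp hk).1).1
      · intro k hk; exact (Finset.mem_filter.mp hk).2.le
    have b3 : ‖∑ k ∈ (s.filter (fun k => ¬ a k < j + θ)).filter (fun k => ¬ a k ≤ j + 1 - θ),
        expChar (G k)‖ ≤ θ / l + 1 := by
      refine hcard _ (((Finset.filter_subset _ _).trans (Finset.filter_subset _ _)).trans hsp)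
        (j + 1 - θ) ?_ ?_
      · intro k hk; exact (not_le.mp (Finset.mem_filter.mp hk).2).le
      · intro k hk
        have := (hfl k (Finset.mem_filter.mp (Finset.mem_filter.mp hk).1).1).2
        linarith
    have b2 : ‖∑ k ∈ (s.filter (fun k => ¬ a k < j + θ)).filter (fun k => a k ≤ j + 1 - θ),
        expChar (G k)‖ ≤ 2 / θ := by
      have hmem : ∀ k, k ∈ (s.filter (fun k => ¬ a k < j + θ)).filter
          (fun k => a k ≤ j + 1 - θ) ↔ k ∈ Finset.Ico p q ∧ j + θ ≤ a k ∧ a k ≤ j + 1 - θ := by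
        intro k
        simp only [hs, Finset.mem_filter, not_lt, Int.floor_eq_iff]
        constructor
        · rintro ⟨⟨⟨h1, _⟩, h2⟩, h3⟩; exact ⟨h1, h2, h3⟩
        · rintro ⟨h1, h2, h3⟩
          exact ⟨⟨⟨h1, by linarith, by linarith⟩, h2⟩, h3⟩
      obtain ⟨p', q', hpq⟩ := exists_eq_Ico_of_ordConnected
        ((s.filter (fun k => ¬ a k < j + θ)).filter (fun k => a k ≤ j + 1 - θ)) (by
          intro x hx y hy c hxc hcy
          rw [hmem] at hx hy ⊢
          have hc : c ∈ Finset.Ico p q := by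
            have := Finset.mem_Ico.mp hx.1
            have := Finset.mem_Ico.mp hy.1
            rw [Finset.mem_Ico]; omega
          exact ⟨hc, hx.2.1.trans (hmono x hx.1 c hc hxc),
            (hmono c hc y hy.1 hcy).trans hy.2.2⟩)
      rw [hpq] at hmem ⊢
      refine kusmin_landau h0 hθ j (fun k hk => ((hmem k).mp hk).2.1)
        (fun k hk => ((hmem k).mp hk).2.2) ?_
      intro k hk1 hk2
      exact hmono k ((hmem k).mp (Finset.mem_Ico.mpr ⟨hk1, by omega⟩)).1 (k + 1)
        ((hmem (k + 1)).mp (Finset.mem_Ico.mpr ⟨by omega, hk2⟩)).1 (by omega)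
    have t1 := norm_add_le (∑ k ∈ s.filter (fun k => a k < j + θ), expChar (G k))
      (∑ k ∈ (s.filter (fun k => ¬ a k < j + θ)).filter (fun k => a k ≤ j + 1 - θ),
        expChar (G k) + ∑ k ∈ (s.filter (fun k => ¬ a k < j + θ)).filter
          (fun k => ¬ a k ≤ j + 1 - θ), expChar (G k))
    have t2 := norm_add_le
      (∑ k ∈ (s.filter (fun k => ¬ a k < j + θ)).filter (fun k => a k ≤ j + 1 - θ),
        expChar (G k)) (∑ k ∈ (s.filter (fun k => ¬ a k < j + θ)).filter
          (fun k => ¬ a k ≤ j + 1 - θ), expChar (G k))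
    linarith
  have hmaps : ∀ k ∈ Finset.Ico p q, ⌊a k⌋ ∈ Finset.Icc ⌊α⌋ ⌊α + R⌋ := fun k hk =>
    Finset.mem_Icc.mpr ⟨Int.floor_le_floor (hlo k hk), Int.floor_le_floor (hhi k hk)⟩
  rw [← Finset.sum_fiberwise_of_maps_to hmaps]
  refine (norm_sum_le _ _).trans ((Finset.sum_le_sum fun j _ => hfib j).trans ?_)
  rw [Finset.sum_const, nsmul_eq_mul, Int.card_Icc]
  refine mul_le_mul_of_nonneg_right ?_ (by positivity)
  have h1 : ⌊α⌋ ≤ ⌊α + R⌋ := Int.floor_le_floor (by linarith)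
  have h2 : (((⌊α + R⌋ + 1 - ⌊α⌋).toNat : ℕ) : ℝ) = ⌊α + R⌋ + 1 - ⌊α⌋ := by
    rw [← Int.cast_natCast, Int.toNat_of_nonneg (by omega)]
    push_cast; ring
  rw [h2]
  linarith [Int.floor_le (α + R), Int.lt_floor_add_one α]

lemma sum_one_div_sqrt_le (N : ℕ) :
    ∑ h ∈ Finset.range N, 1 / √((h : ℝ) + 1) ≤ 2 * √N := by
  induction N with
  | zero => simp
  | succ N ih =>
    rw [Finset.sum_range_succ]
    have h1 : 1 / √((N : ℝ) + 1) ≤ 2 * √((N : ℝ) + 1) - 2 * √N := by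
      have p1 : 0 < √((N : ℝ) + 1) := Real.sqrt_pos.mpr (by positivity)
      have s1 := Real.sq_sqrt (by positivity : (0 : ℝ) ≤ (N : ℝ) + 1)
      have s2 := Real.sq_sqrt (by positivity : (0 : ℝ) ≤ (N : ℝ))
      rw [div_le_iff₀ p1]
      nlinarith [sq_nonneg (√((N : ℝ) + 1) - √N)]
    push_cast
    linarith

lemma sum_one_div_mul_sqrt_le (M N : ℕ) :
    ∑ h ∈ Finset.Ico M (M + N), 1 / (((h : ℝ) + 1) * √((h : ℝ) + 1)) ≤
      4 / √((M : ℝ) + 1) - 4 / √((M : ℝ) + N + 1) := by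
  induction N with
  | zero => simp
  | succ N ih =>
    rw [← add_assoc, Finset.sum_Ico_succ_top (by omega)]
    set y : ℝ := (M : ℝ) + N + 1 with hy
    have hy1 : 1 ≤ y := by
      have : (0 : ℝ) ≤ (M : ℝ) + N := by positivity
      linarith
    have h1 : 1 / (y * √y) ≤ 4 / √y - 4 / √(y + 1) := by
      have p1 : 0 < √y := Real.sqrt_pos.mpr (by linarith)
      have p2 : 0 < √(y + 1) := Real.sqrt_pos.mpr (by linarith)
      have s1 := Real.sq_sqrt (by linarith : (0 : ℝ) ≤ y)
      have s2 := Real.sq_sqrt (by linarith : (0 : ℝ) ≤ y + 1)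
      have hle : √y ≤ √(y + 1) := Real.sqrt_le_sqrt (by linarith)
      rw [div_sub_div _ _ p1.ne' p2.ne', div_le_div_iff₀ (by positivity) (by positivity)]
      have h2 : (√(y + 1) - √y) * (√(y + 1) + √y) = 1 := by nlinarith
      have h3 : √(y + 1) ≤ 4 * y * (√(y + 1) - √y) := by
        have h4 : √(y + 1) * (√(y + 1) + √y) ≤ 4 * y := by nlinarith
        have h5 : 0 ≤ √(y + 1) - √y := by linarith
        calc √(y + 1) = (√(y + 1) * (√(y + 1) + √y)) * (√(y + 1) - √y) := by
              linear_combination -√(y + 1) * h2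
          _ ≤ 4 * y * (√(y + 1) - √y) := mul_le_mul_of_nonneg_right h4 h5
      nlinarith [mul_le_mul_of_nonneg_right h3 p1.le]
    have e : (M : ℝ) + ((N + 1 : ℕ) : ℝ) + 1 = y + 1 := by rw [hy]; push_cast; ring
    have e2 : (((M + N : ℕ) : ℝ) + 1) = y := by rw [hy]; push_cast; ring
    rw [e, e2]
    linarith

lemma sum_min_le {Δ : ℝ} (h0 : 0 < Δ) (N : ℕ) :
    ∑ h ∈ Finset.range N, min (1 / √((h : ℝ) + 1)) (1 / (Δ * (((h : ℝ) + 1) * √((h : ℝ) + 1))))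
      ≤ 6 / √Δ := by
  set M := ⌊1 / Δ⌋₊ with hM
  have hs := Real.sqrt_pos.mpr h0
  have hsq := Real.mul_self_sqrt h0.le
  have hsub : Finset.range N ⊆ Finset.range (M + N) := by
    intro k; simp only [Finset.mem_range]; omega
  refine (Finset.sum_le_sum_of_subset_of_nonneg hsub
    (fun k _ _ => le_min (by positivity) (by positivity))).trans ?_
  rw [Finset.range_eq_Ico, ← Finset.sum_Ico_consecutive _ (Nat.zero_le M) (by omega : M ≤ M + N),
    ← Finset.range_eq_Ico]
  have b1 : ∑ h ∈ Finset.range M,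
      min (1 / √((h : ℝ) + 1)) (1 / (Δ * (((h : ℝ) + 1) * √((h : ℝ) + 1)))) ≤ 2 / √Δ := by
    refine (Finset.sum_le_sum fun h _ => min_le_left _ _).trans
      ((sum_one_div_sqrt_le M).trans ?_)
    have : √(M : ℝ) ≤ √(1 / Δ) := Real.sqrt_le_sqrt (Nat.floor_le (by positivity))
    rw [Real.sqrt_div zero_le_one, Real.sqrt_one] at this
    calc 2 * √(M : ℝ) ≤ 2 * (1 / √Δ) := by linarith
      _ = 2 / √Δ := by ring
  have b2 : ∑ h ∈ Finset.Ico M (M + N),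
      min (1 / √((h : ℝ) + 1)) (1 / (Δ * (((h : ℝ) + 1) * √((h : ℝ) + 1)))) ≤ 4 / √Δ := by
    have e : ∀ h : ℕ, 1 / (Δ * (((h : ℝ) + 1) * √((h : ℝ) + 1)))
        = 1 / Δ * (1 / (((h : ℝ) + 1) * √((h : ℝ) + 1))) := by
      intro h; rw [div_mul_div_comm, one_mul]
    refine (Finset.sum_le_sum fun h _ => (min_le_right _ _).trans (e h).le).trans ?_
    rw [← Finset.mul_sum]
    have h2 := sum_one_div_mul_sqrt_le M N
    have h3 : 0 ≤ 4 / √((M : ℝ) + N + 1) := by positivity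
    have h4 : 4 / √((M : ℝ) + 1) ≤ 4 * √Δ := by
      have h5 : √(1 / Δ) ≤ √((M : ℝ) + 1) := Real.sqrt_le_sqrt (Nat.lt_floor_add_one _).le
      rw [Real.sqrt_div zero_le_one, Real.sqrt_one] at h5
      calc 4 / √((M : ℝ) + 1) ≤ 4 / (1 / √Δ) :=
            div_le_div_of_nonneg_left (by norm_num) (by positivity) h5
        _ = 4 * √Δ := by field_simp
    calc _ ≤ 1 / Δ * (4 * √Δ) := mul_le_mul_of_nonneg_left (by linarith) (by positivity)
      _ = 4 / √Δ := by
        rw [div_mul_eq_mul_div, one_mul, div_eq_div_iff h0.ne' hs.ne']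
        linear_combination 4 * hsq
  have : 6 / √Δ = 2 / √Δ + 4 / √Δ := by ring
  linarith

lemma sum_one_div_sq_le (N : ℕ) :
    ∑ h ∈ Finset.range N, 1 / ((h : ℝ) + 1) ^ 2 ≤ 2 := by
  have : ∑ h ∈ Finset.range N, 1 / ((h : ℝ) + 1) ^ 2 ≤ 2 - 2 / ((N : ℝ) + 1) := by
    induction N with
    | zero => norm_num
    | succ N ih =>
      rw [Finset.sum_range_succ]
      have h1 : 1 / ((N : ℝ) + 1) ^ 2 ≤ 2 / ((N : ℝ) + 1) - 2 / ((N : ℝ) + 1 + 1) := by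
        rw [div_sub_div _ _ (by positivity) (by positivity),
          div_le_div_iff₀ (by positivity) (by positivity)]
        have : (0 : ℝ) ≤ N := by positivity
        nlinarith [mul_nonneg this this]
      push_cast
      linarith
  have h2 : 0 ≤ 2 / ((N : ℝ) + 1) := by positivity
  linarith

lemma re_expChar_mul_sum (s : Finset ℕ) (u : ℕ → ℝ) (n a b : ℝ) :
    ∑ k ∈ s, (Real.cos (2 * Real.pi * n * (u k + a)) - Real.cos (2 * Real.pi * n * (u k + b)))
      = ((expChar (n * a) - expChar (n * b)) * ∑ k ∈ s, expChar (n * u k)).re := by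
  rw [Finset.mul_sum, Complex.re_sum]
  refine Finset.sum_congr rfl fun k _ => ?_
  rw [sub_mul, ← expChar_add, ← expChar_add, Complex.sub_re, re_expChar, re_expChar]
  congr 2 <;> ring

lemma abs_sum_periodicBernoulliTwo_le {s : Finset ℕ} {u : ℕ → ℝ} {Δ A E : ℝ} (h0 : 0 < Δ)
    (hA : 0 ≤ A) (hE : 0 ≤ E)
    (hS : ∀ h : ℕ, 1 ≤ h → ‖∑ k ∈ s, expChar (h * u k)‖ ≤ A * √h + E / h) (b : ℝ) :
    |∑ k ∈ s, (periodicBernoulliTwo (u k + (b + Δ)) - periodicBernoulliTwo (u k + b)) / (2 * Δ)|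
      ≤ 6 * A / √Δ + 2 * E := by
  set t : ℕ → ℝ := fun n => ∑ k ∈ s,
    (1 / (Real.pi ^ 2 * (n : ℝ) ^ 2) * Real.cos (2 * Real.pi * n * (u k + (b + Δ)))
      - 1 / (Real.pi ^ 2 * (n : ℝ) ^ 2) * Real.cos (2 * Real.pi * n * (u k + b))) / (2 * Δ)
    with ht
  have hsum : HasSum t (∑ k ∈ s,
      (periodicBernoulliTwo (u k + (b + Δ)) - periodicBernoulliTwo (u k + b)) / (2 * Δ)) :=
    hasSum_sum fun k _ => ((hasSum_periodicBernoulliTwo _).sub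
      (hasSum_periodicBernoulliTwo _)).div_const _
  have htn : ∀ n : ℕ, t n = 1 / (2 * Δ * (Real.pi ^ 2 * (n : ℝ) ^ 2)) *
      ((expChar (n * (b + Δ)) - expChar (n * b)) * ∑ k ∈ s, expChar (n * u k)).re := by
    intro n
    rw [← re_expChar_mul_sum, Finset.mul_sum]
    refine Finset.sum_congr rfl fun k _ => ?_
    rw [mul_comm (2 * Δ), ← div_div]
    ring
  have hterm : ∀ h : ℕ, |t (h + 1)| ≤
      A * min (1 / √((h : ℝ) + 1)) (1 / (Δ * (((h : ℝ) + 1) * √((h : ℝ) + 1))))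
        + E * (1 / ((h : ℝ) + 1) ^ 2) := by
    intro h
    set y : ℝ := (h : ℝ) + 1 with hy
    have hy0 : 0 < y := by positivity
    have ey : (((h + 1 : ℕ) : ℝ)) = y := by rw [hy]; push_cast; ring
    have hsy := Real.sqrt_pos.mpr hy0
    have hsq := Real.mul_self_sqrt hy0.le
    have hSy := hS (h + 1) (by omega)
    rw [htn, ey]
    rw [ey] at hSy
    set S := ∑ k ∈ s, expChar (y * u k)
    set d := expChar (y * (b + Δ)) - expChar (y * b)
    have hd1 : ‖d‖ ≤ 2 := by
      refine (norm_sub_le _ _).trans ?_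
      rw [norm_expChar, norm_expChar]; norm_num
    have hd2 : ‖d‖ ≤ 2 * Real.pi * (y * Δ) := by
      have := norm_expChar_sub_le (y * (b + Δ)) (y * b)
      rwa [← mul_sub, add_sub_cancel_left, abs_of_pos (by positivity)] at this
    have hpi := Real.pi_gt_three
    have hw : |1 / (2 * Δ * (Real.pi ^ 2 * y ^ 2)) * (d * S).re| ≤
        ‖d‖ / (2 * Δ * (Real.pi ^ 2 * y ^ 2)) * ‖S‖ := by
      rw [abs_mul, abs_of_pos (by positivity)]
      calc _ ≤ 1 / (2 * Δ * (Real.pi ^ 2 * y ^ 2)) * (‖d‖ * ‖S‖) := by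
            rw [← norm_mul]
            exact mul_le_mul_of_nonneg_left (Complex.abs_re_le_norm _) (by positivity)
        _ = _ := by ring
    have c1 : ‖d‖ / (2 * Δ * (Real.pi ^ 2 * y ^ 2)) ≤ 1 / (Δ * y ^ 2) := by
      rw [div_le_div_iff₀ (by positivity) (by positivity)]
      have : ‖d‖ * (Δ * y ^ 2) ≤ 2 * (Δ * y ^ 2) :=
        mul_le_mul_of_nonneg_right hd1 (by positivity)
      have h9 : 1 ≤ Real.pi ^ 2 := by nlinarith
      have : 2 * (Δ * y ^ 2) * 1 ≤ 2 * (Δ * y ^ 2) * Real.pi ^ 2 :=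
        mul_le_mul_of_nonneg_left h9 (by positivity)
      linarith
    have c2 : ‖d‖ / (2 * Δ * (Real.pi ^ 2 * y ^ 2)) ≤ 1 / y := by
      rw [div_le_div_iff₀ (by positivity) hy0]
      have : ‖d‖ * y ≤ 2 * Real.pi * (y * Δ) * y := mul_le_mul_of_nonneg_right hd2 hy0.le
      have : (2 * Real.pi * (y * Δ) * y) * 1 ≤ (2 * Real.pi * (y * Δ) * y) * Real.pi :=
        mul_le_mul_of_nonneg_left (by linarith) (by positivity)
      linarith
    set w := ‖d‖ / (2 * Δ * (Real.pi ^ 2 * y ^ 2))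
    have hw0 : 0 ≤ w := by positivity
    have m1 : w * √y ≤ min (1 / √y) (1 / (Δ * (y * √y))) := by
      refine le_min ?_ ?_
      · calc w * √y ≤ 1 / y * √y := mul_le_mul_of_nonneg_right c2 hsy.le
          _ = 1 / √y := by
            rw [div_mul_eq_mul_div, one_mul, div_eq_div_iff hy0.ne' hsy.ne']; linarith
      · calc w * √y ≤ 1 / (Δ * y ^ 2) * √y := mul_le_mul_of_nonneg_right c1 hsy.le
          _ = 1 / (Δ * (y * √y)) := by
            rw [div_mul_eq_mul_div, one_mul, div_eq_div_iff (by positivity) (by positivity)]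
            linear_combination Δ * y * hsq
    have m2 : w * (1 / y) ≤ 1 / y ^ 2 := by
      calc w * (1 / y) ≤ 1 / y * (1 / y) := mul_le_mul_of_nonneg_right c2 (by positivity)
        _ = 1 / y ^ 2 := by rw [div_mul_div_comm, one_mul, sq]
    calc _ ≤ w * ‖S‖ := hw
      _ ≤ w * (A * √y + E / y) := mul_le_mul_of_nonneg_left hSy hw0
      _ = A * (w * √y) + E * (w * (1 / y)) := by ring
      _ ≤ _ := add_le_add (mul_le_mul_of_nonneg_left m1 hA) (mul_le_mul_of_nonneg_left m2 hE)
  have hpartial : ∀ N : ℕ, |∑ n ∈ Finset.range (N + 1), t n| ≤ 6 * A / √Δ + 2 * E := by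
    intro N
    rw [Finset.sum_range_succ']
    have ht0 : t 0 = 0 := by rw [htn]; simp
    rw [ht0, add_zero]
    refine (Finset.abs_sum_le_sum_abs _ _).trans
      ((Finset.sum_le_sum fun h _ => hterm h).trans ?_)
    rw [Finset.sum_add_distrib, ← Finset.mul_sum, ← Finset.mul_sum]
    calc _ ≤ A * (6 / √Δ) + E * 2 := add_le_add
          (mul_le_mul_of_nonneg_left (sum_min_le h0 N) hA)
          (mul_le_mul_of_nonneg_left (sum_one_div_sq_le N) hE)
      _ = _ := by ring
  have hlim := ((hsum.tendsto_sum_nat).comp (Filter.tendsto_add_atTop_nat 1)).abs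
  exact le_of_tendsto hlim (Filter.Eventually.of_forall hpartial)

/-- Sawtooth sums are controlled by exponential sums. -/
lemma abs_sum_sawtooth_le {s : Finset ℕ} {u : ℕ → ℝ} {Δ A E : ℝ} (h0 : 0 < Δ) (h1 : Δ ≤ 1)
    (hA : 0 ≤ A) (hE : 0 ≤ E)
    (hS : ∀ h : ℕ, 1 ≤ h → ‖∑ k ∈ s, expChar (h * u k)‖ ≤ A * √h + E / h) :
    |∑ k ∈ s, (Int.fract (u k) - 1 / 2)| ≤ s.card * Δ + (6 * A / √Δ + 2 * E) := by
  have hup := (abs_le.mp (abs_sum_periodicBernoulliTwo_le h0 hA hE hS (-Δ))).2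
  have hlo := (abs_le.mp (abs_sum_periodicBernoulliTwo_le h0 hA hE hS 0)).1
  rw [abs_le]
  constructor
  · have : ∑ k ∈ s, ((periodicBernoulliTwo (u k + (0 + Δ)) - periodicBernoulliTwo (u k + 0))
        / (2 * Δ) - Δ) ≤ ∑ k ∈ s, (Int.fract (u k) - 1 / 2) :=
      Finset.sum_le_sum fun k _ => by
        rw [zero_add, add_zero]; exact le_sawtooth h0 h1 (u k)
    rw [Finset.sum_sub_distrib, Finset.sum_const, nsmul_eq_mul] at this
    linarith
  · have : ∑ k ∈ s, (Int.fract (u k) - 1 / 2) ≤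
        ∑ k ∈ s, ((periodicBernoulliTwo (u k + (-Δ + Δ)) - periodicBernoulliTwo (u k + -Δ))
        / (2 * Δ) + Δ) :=
      Finset.sum_le_sum fun k _ => by
        rw [neg_add_cancel, add_zero, ← sub_eq_add_neg]; exact sawtooth_le h0 h1 (u k)
    rw [Finset.sum_add_distrib, Finset.sum_const, nsmul_eq_mul] at this
    linarith

lemma card_le_of_mul_mem {p q : ℕ} {m D : ℝ} (hm : 0 < m) (hD : 0 < D)
    (hk : ∀ k ∈ Finset.Ico p q, D < m * k ∧ m * k ≤ 2 * D) :
    ((Finset.Ico p q).card : ℝ) ≤ D / m + 1 :=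
  card_le_of_separated (a := fun k => m * k) (β := D) hm hD.le
    (fun i _ k _ _ => le_of_eq (by ring)) (fun k h => (hk k h).1.le)
    (fun k h => by linarith [(hk k h).2])

/-- Exponential sums along a dyadic piece of a hyperbola. -/
lemma norm_sum_expChar_hyperbola_le {p q : ℕ} {z m δ D : ℝ} (hz : 0 < z) (hm : 0 < m)
    (hδ0 : 0 ≤ δ) (hδ1 : δ ≤ 1) (hD : 1 ≤ D) (hmD : m ≤ 2 * D)
    (hk : ∀ k ∈ Finset.Ico p q, D < m * k ∧ m * k ≤ 2 * D) :
    ‖∑ k ∈ Finset.Ico p q, expChar (z / (m * k + δ))‖ ≤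
      200 * (D / m) * √(z * m ^ 2 / D ^ 3) + 30 * (D ^ 2 / (z * m)) := by
  have hD0 : 0 < D := by linarith
  set G : ℕ → ℝ := fun k => z / (m * k + δ) with hG
  have hX : ∀ k ∈ Finset.Ico p q, D ≤ m * k + δ ∧ m * k + δ ≤ 3 * D := fun k h => by
    have := hk k h
    constructor <;> linarith
  have hdiff : ∀ k ∈ Finset.Ico p q,
      G (k + 1) - G k = -(z * m / ((m * k + δ) * (m * k + δ + m))) := by
    intro k h
    have h1 : 0 < m * k + δ := by linarith [hX k h]
    have h2 : m * ((k + 1 : ℕ) : ℝ) + δ = m * k + δ + m := by push_cast; ring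
    simp only [hG]
    rw [h2, div_sub_div _ _ (by positivity) h1.ne', ← neg_div,
      div_eq_div_iff (by positivity) (by positivity)]
    ring
  set μ := z * m / D ^ 2 with hμ
  set lam := z * m ^ 2 / D ^ 3 with hlam
  have hμ0 : 0 < μ := by positivity
  have hlam0 : 0 < lam := by positivity
  have hinv : D ^ 2 / (z * m) = 1 / μ := by rw [hμ, one_div_div]
  have hμlam : μ = D / m * lam := by rw [hμ, hlam]; field_simp
  have hlo : ∀ k ∈ Finset.Ico p q, -μ ≤ G (k + 1) - G k := by
    intro k h
    obtain ⟨h1, h2⟩ := hX k h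
    rw [hdiff k h, neg_le_neg_iff]
    refine div_le_div_of_nonneg_left (by positivity) (by positivity) ?_
    nlinarith
  have hhi : ∀ k ∈ Finset.Ico p q, G (k + 1) - G k ≤ -(μ / 15) := by
    intro k h
    obtain ⟨h1, h2⟩ := hX k h
    rw [hdiff k h, neg_le_neg_iff, hμ, div_div]
    refine div_le_div_of_nonneg_left (by positivity) ?_ ?_
    · have : 0 < m * k + δ := by linarith
      positivity
    · have : (m * k + δ) * (m * k + δ + m) ≤ (3 * D) * (5 * D) :=
        mul_le_mul h2 (by linarith) (by linarith) (by linarith)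
      linarith
  have hstep : ∀ k, k ∈ Finset.Ico p q → k + 1 ∈ Finset.Ico p q →
      lam / 64 ≤ (G (k + 2) - G (k + 1)) - (G (k + 1) - G k) := by
    intro k h h'
    obtain ⟨h1, h2⟩ := hX k h
    have e := hdiff (k + 1) h'
    have h0 : 0 < m * k + δ := by linarith
    have e2 : m * ((k + 1 : ℕ) : ℝ) + δ = m * k + δ + m := by push_cast; ring
    rw [e2] at e
    rw [hdiff k h, show k + 2 = k + 1 + 1 from rfl, e]
    set X := m * k + δ
    have e3 : -(z * m / ((X + m) * (X + m + m))) - -(z * m / (X * (X + m)))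
        = 2 * (z * m ^ 2) / (X * (X + m) * (X + m + m)) := by
      field_simp
      ring
    have h3 : X * (X + m) * (X + m + m) ≤ 128 * D ^ 3 := by
      have : X * (X + m) * (X + m + m) ≤ (3 * D) * (5 * D) * (7 * D) :=
        mul_le_mul (mul_le_mul h2 (by linarith) (by linarith) (by linarith)) (by linarith)
          (by linarith) (by positivity)
      have : 0 < D ^ 3 := by positivity
      linarith
    rw [e3, hlam, div_div, div_le_div_iff₀ (by positivity) (by positivity)]
    have := mul_le_mul_of_nonneg_left h3 (by positivity : 0 ≤ z * m ^ 2)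
    linarith
  have hsep : ∀ i ∈ Finset.Ico p q, ∀ k ∈ Finset.Ico p q, i ≤ k →
      lam / 64 * (k - i : ℝ) ≤ (G (k + 1) - G k) - (G (i + 1) - G i) := by
    intro i hi k hk' hik
    induction k, hik using Nat.le_induction with
    | base => simp
    | succ k hik ih =>
      have hkm : k ∈ Finset.Ico p q := by
        rw [Finset.mem_Ico] at hi hk' ⊢; omega
      have h1 := ih hkm
      have h2 := hstep k hkm hk'
      push_cast
      have e : lam / 64 * ((k : ℝ) + 1 - i) = lam / 64 * (k - i) + lam / 64 := by ring
      rw [e]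
      linarith
  have hKlow : 1 / 2 ≤ D / m := by rw [le_div_iff₀ hm]; linarith
  rw [hinv]
  rcases le_or_gt μ (1 / 2) with hcase | hcase
  · have := kusmin_landau (G := G) (θ := μ / 15) (p := p) (q := q) (by positivity) (by linarith)
      (-1) (fun k h => by push_cast; linarith [hlo k h])
      (fun k h => by push_cast; linarith [hhi k h]) (by
        intro k h1 h2
        have := hstep k (Finset.mem_Ico.mpr ⟨h1, by omega⟩) (Finset.mem_Ico.mpr ⟨by omega, h2⟩)
        linarith)
    have e : 2 / (μ / 15) = 30 * (1 / μ) := by field_simp; norm_num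
    rw [e] at this
    have : 0 ≤ 200 * (D / m) * √lam := by positivity
    linarith
  have hinv0 : 0 < 1 / μ := by positivity
  have hs0 := Real.sqrt_pos.mpr hlam0
  have hsq := Real.mul_self_sqrt hlam0.le
  rcases le_or_gt lam 16 with hl | hl
  · have hsle : √lam ≤ 4 := by
      rw [Real.sqrt_le_left (by norm_num)]; linarith
    have main := norm_sum_expChar_le (G := G) (l := lam / 64) (θ := √lam / 8) (α := -μ) (R := μ)
      (by positivity) (by positivity) (by linarith) hsep hlo
      (fun k h => by linarith [hhi k h]) hμ0.le
    have e1 : √lam / 8 / (lam / 64) = 8 / √lam := by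
      rw [div_div_div_eq, div_eq_div_iff (by positivity) hs0.ne']
      linear_combination 64 * hsq
    have e2 : 2 / (√lam / 8) = 2 * (8 / √lam) := by field_simp
    rw [e1, e2] at main
    have h8 : 2 ≤ 8 / √lam := by rw [le_div_iff₀ hs0]; linarith
    have h9 : μ * (8 / √lam) = 8 * (D / m * √lam) := by
      rw [hμlam, mul_div_assoc', div_eq_iff hs0.ne']
      linear_combination -(8 * (D / m)) * hsq
    have : (μ + 2) * (2 * (8 / √lam) + 2 * (8 / √lam + 1)) ≤ (5 * μ) * (5 * (8 / √lam)) :=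
      mul_le_mul (by linarith) (by linarith) (by positivity) (by positivity)
    linarith
  · have hsge : 4 ≤ √lam := Real.le_sqrt_of_sq_le (by linarith)
    have hc := card_le_of_mul_mem hm hD0 hk
    have h1 : ‖∑ k ∈ Finset.Ico p q, expChar (G k)‖ ≤ ((Finset.Ico p q).card : ℝ) := by
      refine (norm_sum_le _ _).trans ?_
      simp only [norm_expChar, Finset.sum_const, nsmul_eq_mul, mul_one, le_refl]
    have := mul_le_mul_of_nonneg_left hsge (by positivity : 0 ≤ 200 * (D / m))
    linarith

lemma abs_sum_sawtooth_hyperbola_le {p q : ℕ} {x m δ D : ℝ} (hx : 0 < x) (hm : 0 < m)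
    (hδ0 : 0 ≤ δ) (hδ1 : δ ≤ 1) (hD : 1 ≤ D) (hmD : m ≤ 2 * D)
    (hk : ∀ k ∈ Finset.Ico p q, D < m * k ∧ m * k ≤ 2 * D) :
    |∑ k ∈ Finset.Ico p q, (Int.fract (x / (m * k + δ)) - 1 / 2)| ≤
      1203 * (x ^ ((1 : ℝ) / 3) * m ^ (-(1 : ℝ) / 3)) + 60 * (D ^ 2 / (x * m)) := by
  have hD0 : 0 < D := by linarith
  set lam := x * m ^ 2 / D ^ 3 with hlam
  have hlam0 : 0 < lam := by positivity
  set Δ := lam ^ ((1 : ℝ) / 3) with hΔ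
  have hΔ0 : 0 < Δ := by positivity
  have hΔ3 : Δ ^ 3 = lam := by
    rw [hΔ, ← Real.rpow_natCast, ← Real.rpow_mul hlam0.le]; norm_num
  have hKΔ : D / m * Δ = x ^ ((1 : ℝ) / 3) * m ^ (-(1 : ℝ) / 3) := by
    have h3 : (D / m * Δ) ^ 3 = (x ^ ((1 : ℝ) / 3) * m ^ (-(1 : ℝ) / 3)) ^ 3 := by
      rw [mul_pow, mul_pow, hΔ3, hlam, ← Real.rpow_natCast (x ^ _), ← Real.rpow_mul hx.le,
        ← Real.rpow_natCast (m ^ _), ← Real.rpow_mul hm.le]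
      norm_num [Real.rpow_neg_one]
      field_simp
    exact (pow_left_inj₀ (by positivity) (by positivity) (by norm_num)).mp h3
  have hKlow : 1 / 2 ≤ D / m := by rw [le_div_iff₀ hm]; linarith
  have hc := card_le_of_mul_mem hm hD0 hk
  have hc' : ((Finset.Ico p q).card : ℝ) ≤ 3 * (D / m) := by linarith
  have hE0 : 0 < D ^ 2 / (x * m) := by positivity
  rw [← hKΔ]
  rcases le_or_gt Δ 1 with h1 | h1
  · have main := abs_sum_sawtooth_le (s := Finset.Ico p q) (u := fun k => x / (m * k + δ))
      (A := 200 * (D / m) * √lam) (E := 30 * (D ^ 2 / (x * m))) hΔ0 h1 (by positivity)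
      (by positivity) (by
        intro h hh
        have hh0 : (0 : ℝ) < h := by exact_mod_cast hh
        have := norm_sum_expChar_hyperbola_le (z := h * x) (by positivity) hm hδ0 hδ1 hD hmD hk
        simp only [mul_div_assoc'] at this ⊢
        refine this.trans (le_of_eq ?_)
        have e : (h : ℝ) * x * m ^ 2 / D ^ 3 = lam * h := by rw [hlam]; ring
        rw [e, Real.sqrt_mul hlam0.le]
        field_simp)
    have e1 : √lam = Δ * √Δ := by
      rw [← hΔ3, show Δ ^ 3 = Δ ^ 2 * Δ by ring, Real.sqrt_mul (by positivity),
        Real.sqrt_sq hΔ0.le]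
    have e2 : 6 * (200 * (D / m) * √lam) / √Δ = 1200 * (D / m * Δ) := by
      have := Real.sqrt_pos.mpr hΔ0
      rw [e1, div_eq_iff this.ne']; ring
    rw [e2] at main
    have := mul_le_mul_of_nonneg_right hc' hΔ0.le
    linarith
  · have h2 : |∑ k ∈ Finset.Ico p q, (Int.fract (x / (m * k + δ)) - 1 / 2)| ≤
        ((Finset.Ico p q).card : ℝ) := by
      refine (Finset.abs_sum_le_sum_abs _ _).trans ?_
      rw [← nsmul_one, ← Finset.sum_const]
      refine Finset.sum_le_sum fun k _ => ?_
      rw [abs_le]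
      constructor <;> linarith [Int.fract_nonneg (x / (m * k + δ)),
        Int.fract_lt_one (x / (m * k + δ))]
    have := mul_le_mul_of_nonneg_left h1.le (by positivity : 0 ≤ D / m)
    linarith

lemma sum_divisors_div_eq {f g : ℕ → ℝ} {n : ℕ} (hn : 1 ≤ n)
    (hf : f n = ∑ d ∈ n.divisors, (d : ℝ) * g (n / d)) :
    f n / n = ∑ m ∈ n.divisors, g m / m := by
  rw [hf, ← Nat.sum_div_divisors n (fun d => (d : ℝ) * g (n / d)), Finset.sum_div]
  refine Finset.sum_congr rfl fun m hm => ?_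
  obtain ⟨⟨k, rfl⟩, hn0⟩ := Nat.mem_divisors.mp hm
  have hm0 : 0 < m := Nat.pos_of_ne_zero (by rintro rfl; simp at hn0)
  have hk0 : 0 < k := Nat.pos_of_ne_zero (by rintro rfl; simp at hn0)
  rw [Nat.mul_div_cancel_left k hm0, Nat.mul_div_cancel m hk0]
  have : (m : ℝ) ≠ 0 := by positivity
  have : (k : ℝ) ≠ 0 := by positivity
  push_cast
  field_simp

lemma sum_divisors_mul_eq (a b : ℕ) (w F : ℕ → ℝ) :
    ∑ d ∈ Finset.Ioc a b, (∑ m ∈ d.divisors, w m) * F d =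
      ∑ m ∈ Finset.Icc 1 b, w m * ∑ k ∈ Finset.Ico (a / m + 1) (b / m + 1), F (m * k) := by
  have h1 : ∀ d ∈ Finset.Ioc a b, (∑ m ∈ d.divisors, w m) * F d =
      ∑ m ∈ Finset.Icc 1 b, if m ∣ d then w m * F d else 0 := by
    intro d hd
    rw [Finset.mem_Ioc] at hd
    rw [Finset.sum_mul, ← Finset.sum_filter]
    refine Finset.sum_congr ?_ fun _ _ => rfl
    ext m
    simp only [Nat.mem_divisors, Finset.mem_filter, Finset.mem_Icc]
    constructor
    · rintro ⟨h, _⟩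
      have := Nat.le_of_dvd (by omega) h
      have := Nat.pos_of_dvd_of_pos h (by omega)
      exact ⟨by omega, h⟩
    · rintro ⟨_, h⟩
      exact ⟨h, by omega⟩
  rw [Finset.sum_congr rfl h1, Finset.sum_comm]
  refine Finset.sum_congr rfl fun m hm => ?_
  rw [Finset.mem_Icc] at hm
  have hm0 : 0 < m := hm.1
  rw [← Finset.sum_filter, Finset.mul_sum]
  symm
  refine Finset.sum_nbij' (fun k => m * k) (fun d => d / m) ?_ ?_ ?_ ?_ ?_
  · intro k hk
    rw [Finset.mem_Ico, Nat.succ_le_iff, Nat.div_lt_iff_lt_mul hm0, Nat.lt_succ_iff,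
      Nat.le_div_iff_mul_le hm0, mul_comm] at hk
    simp [hk]
  · intro d hd
    rw [Finset.mem_filter, Finset.mem_Ioc] at hd
    obtain ⟨⟨h1, h2⟩, k, rfl⟩ := hd
    rw [Nat.mul_div_cancel_left k hm0, Finset.mem_Ico, Nat.succ_le_iff,
      Nat.div_lt_iff_lt_mul hm0, Nat.lt_succ_iff, Nat.le_div_iff_mul_le hm0, mul_comm]
    exact ⟨h1, h2⟩
  · intro k _
    exact Nat.mul_div_cancel_left k hm0
  · intro d hd
    exact Nat.mul_div_cancel' (Finset.mem_filter.mp hd).2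
  · intro k _
    rfl

/-- Key estimate: for `f = id ∗ g` with `g` bounded and `δ ∈ {0,1}`, uniformly for
`1 ≤ D ≤ x`, `𝔖_δ(x,D) = ∑_{D < d ≤ 2D} (f(d)/d) ψ(x/(d+δ))` satisfies
`𝔖_δ(x,D) ≪ x^{1/3} + x^{1/2} D^{-1/2} log x + x⁻¹ D²`. -/
theorem key_estimate (f g : ℕ → ℝ)
    (hf : ∀ n : ℕ, 1 ≤ n → f n = ∑ d ∈ n.divisors, (d : ℝ) * g (n / d))
    (hg : ∃ B : ℝ, ∀ n : ℕ, 1 ≤ n → |g n| ≤ B)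
    (δ : ℝ) (hδ : δ = 0 ∨ δ = 1) :
    ∃ C : ℝ, ∀ x D : ℝ, 2 ≤ x → 1 ≤ D → D ≤ x →
      |∑ d ∈ Finset.Ioc ⌊D⌋₊ ⌊2 * D⌋₊,
          (f d / d) * (Int.fract (x / (d + δ)) - 1 / 2)| ≤
        C * (x ^ ((1 : ℝ) / 3) + x ^ ((1 : ℝ) / 2) * D ^ (-(1 : ℝ) / 2) * Real.log x
          + x⁻¹ * D ^ 2) := by
  obtain ⟨B, hB⟩ := hg
  have hB0 : 0 ≤ B := (abs_nonneg _).trans (hB 1 le_rfl)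
  have hδ0 : 0 ≤ δ := by rcases hδ with rfl | rfl <;> norm_num
  have hδ1 : δ ≤ 1 := by rcases hδ with rfl | rfl <;> norm_num
  have hZ : Summable fun m : ℕ => (m : ℝ) ^ (-(4 : ℝ) / 3) :=
    Real.summable_nat_rpow.mpr (by norm_num)
  refine ⟨B * 1203 * ∑' m : ℕ, (m : ℝ) ^ (-(4 : ℝ) / 3), fun x D hx hD _ => ?_⟩
  have hx0 : 0 < x := by linarith
  have hD0 : 0 < D := by linarith
  set Q := x ^ ((1 : ℝ) / 3) + x⁻¹ * D ^ 2 with hQ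
  have hQ0 : 0 ≤ Q := by positivity
  have hterm : ∀ m ∈ Finset.Icc 1 ⌊2 * D⌋₊,
      |g m / m * ∑ k ∈ Finset.Ico (⌊D⌋₊ / m + 1) (⌊2 * D⌋₊ / m + 1),
        (Int.fract (x / (((m * k : ℕ) : ℝ) + δ)) - 1 / 2)| ≤
      B * 1203 * Q * (m : ℝ) ^ (-(4 : ℝ) / 3) := by
    intro m hm
    rw [Finset.mem_Icc] at hm
    have hm1 : (1 : ℝ) ≤ m := by exact_mod_cast hm.1
    have hm0 : (0 : ℝ) < m := by linarith
    have hmD : (m : ℝ) ≤ 2 * D := (Nat.le_floor_iff (by positivity)).mp hm.2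
    have hT := abs_sum_sawtooth_hyperbola_le (p := ⌊D⌋₊ / m + 1) (q := ⌊2 * D⌋₊ / m + 1)
      hx0 hm0 hδ0 hδ1 hD hmD (by
        intro k hk
        rw [Finset.mem_Ico, Nat.succ_le_iff, Nat.div_lt_iff_lt_mul hm.1, Nat.lt_succ_iff,
          Nat.le_div_iff_mul_le hm.1, mul_comm k m, Nat.floor_lt hD0.le,
          Nat.le_floor_iff (by positivity)] at hk
        exact_mod_cast hk)
    have hT' : 1203 * (x ^ ((1 : ℝ) / 3) * (m : ℝ) ^ (-(1 : ℝ) / 3)) + 60 * (D ^ 2 / (x * m)) ≤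
        1203 * Q * (m : ℝ) ^ (-(1 : ℝ) / 3) := by
      have h1 : (m : ℝ)⁻¹ ≤ (m : ℝ) ^ (-(1 : ℝ) / 3) := by
        rw [← Real.rpow_neg_one]
        exact Real.rpow_le_rpow_of_exponent_le hm1 (by norm_num)
      have h2 : D ^ 2 / (x * m) = x⁻¹ * D ^ 2 * (m : ℝ)⁻¹ := by field_simp
      have h3 := mul_le_mul_of_nonneg_left h1 (by positivity : 0 ≤ x⁻¹ * D ^ 2)
      have h4 : 0 ≤ x⁻¹ * D ^ 2 * (m : ℝ)⁻¹ := by positivity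
      rw [hQ, h2]
      linarith
    have hgm : |g m / m| ≤ B / m := by
      rw [abs_div, abs_of_pos hm0]
      exact div_le_div_of_nonneg_right (hB m hm.1) hm0.le
    rw [abs_mul]
    push_cast
    calc _ ≤ B / m * (1203 * Q * (m : ℝ) ^ (-(1 : ℝ) / 3)) :=
          mul_le_mul hgm (hT.trans hT') (abs_nonneg _) (by positivity)
      _ = _ := by
        rw [show (-(4 : ℝ) / 3) = -1 + -(1 : ℝ) / 3 by norm_num, Real.rpow_add hm0,
          Real.rpow_neg_one]
        ring
  have hrewrite : ∑ d ∈ Finset.Ioc ⌊D⌋₊ ⌊2 * D⌋₊,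
      (f d / d) * (Int.fract (x / (d + δ)) - 1 / 2) =
      ∑ m ∈ Finset.Icc 1 ⌊2 * D⌋₊, g m / m *
        ∑ k ∈ Finset.Ico (⌊D⌋₊ / m + 1) (⌊2 * D⌋₊ / m + 1),
          (Int.fract (x / (((m * k : ℕ) : ℝ) + δ)) - 1 / 2) := by
    rw [← sum_divisors_mul_eq ⌊D⌋₊ ⌊2 * D⌋₊ (fun m => g m / m)
      (fun d => Int.fract (x / ((d : ℝ) + δ)) - 1 / 2)]
    refine Finset.sum_congr rfl fun d hd => ?_
    have hd1 : 1 ≤ d := by rw [Finset.mem_Ioc] at hd; omega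
    rw [sum_divisors_div_eq hd1 (hf d hd1)]
  have hlog : 0 ≤ x ^ ((1 : ℝ) / 2) * D ^ (-(1 : ℝ) / 2) * Real.log x := by
    have := Real.log_nonneg (by linarith : 1 ≤ x)
    positivity
  have hZ0 : 0 ≤ ∑' m : ℕ, (m : ℝ) ^ (-(4 : ℝ) / 3) := tsum_nonneg fun m => by positivity
  rw [hrewrite]
  calc _ ≤ ∑ m ∈ Finset.Icc 1 ⌊2 * D⌋₊, B * 1203 * Q * (m : ℝ) ^ (-(4 : ℝ) / 3) :=
        (Finset.abs_sum_le_sum_abs _ _).trans (Finset.sum_le_sum hterm)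
    _ = B * 1203 * Q * ∑ m ∈ Finset.Icc 1 ⌊2 * D⌋₊, (m : ℝ) ^ (-(4 : ℝ) / 3) := by
        rw [Finset.mul_sum]
    _ ≤ B * 1203 * Q * ∑' m : ℕ, (m : ℝ) ^ (-(4 : ℝ) / 3) :=
        mul_le_mul_of_nonneg_left (hZ.sum_le_tsum _ fun m _ => by positivity) (by positivity)
    _ = B * 1203 * (∑' m : ℕ, (m : ℝ) ^ (-(4 : ℝ) / 3)) * Q := by ring
    _ ≤ _ := mul_le_mul_of_nonneg_left (by rw [hQ]; linarith) (by positivity)
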